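/- Let a : ℝ → [0,1] satisfy (A1') and have √a κ-Lipschitz, and H ∈ 𝓗_sqc(α0,α1,γ,η) with γ > 2. Let J be an open bounded interval with a > 0 on J, and let x0 ∈ ∂J with a(x0) = 0. Let f ∈ C¹(J) be a bounded solution of the ODE a(x)f' + H(x,f) = λ on J, for some λ ∈ ℝ. Then the limit lim_{x→x0, x∈J} f(x) exists and belongs to {p⁻_λ(x0), p⁺_λ(x0)}. In particular λ ≥ λ̂(x0). -/

import Mathlib

open Real Set Filter Topology MeasureTheory

noncomputable section

/-- The Hamiltonian class `𝓗(α₀, α₁, γ)`: growth condition (H1) and the local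
Lipschitz conditions (H2), (H3). -/
def HamClass (a0 a1 g : ℝ) (H : ℝ → ℝ → ℝ) : Prop :=
  (∀ x p : ℝ, a0 * |p| ^ g - 1 / a0 ≤ H x p) ∧
  (∀ x p : ℝ, H x p ≤ a1 * (|p| ^ g + 1)) ∧
  (∀ x p q : ℝ, |H x p - H x q| ≤ a1 * (|p| + |q| + 1) ^ (g - 1) * |p - q|) ∧
  (∀ x y p : ℝ, |H x p - H y p| ≤ a1 * (|p| ^ g + 1) * |x - y|)

/-- The strictly quasiconvex class `𝓗_sqc(α₀, α₁, γ, η)` with (unique) minimizer map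
`phat`. -/
def HamSqc (a0 a1 g eta : ℝ) (H : ℝ → ℝ → ℝ) (phat : ℝ → ℝ) : Prop :=
  HamClass a0 a1 g H ∧
  (∀ x p : ℝ, H x (phat x) ≤ H x p) ∧
  (∀ x p : ℝ, (∀ q : ℝ, H x p ≤ H x q) → p = phat x) ∧
  (∀ x p1 p2 : ℝ, p1 < p2 → p2 ≤ phat x → eta * |p1 - p2| ≤ H x p1 - H x p2) ∧
  (∀ x p1 p2 : ℝ, phat x ≤ p1 → p1 < p2 → eta * |p1 - p2| ≤ H x p2 - H x p1)

/-- A continuous `u` is a viscosity supersolution of `a(x) u'' + H(x, u') = lam` on `U`: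
at every local minimum point `x0 ∈ U` of `u - φ`, with `φ` of class `C²`, one has
`a(x0) φ''(x0) + H(x0, φ'(x0)) ≤ lam`. -/
def ViscSuperOn (a : ℝ → ℝ) (H : ℝ → ℝ → ℝ) (lam : ℝ) (U : Set ℝ) (u : ℝ → ℝ) : Prop :=
  ∀ φ : ℝ → ℝ, ContDiff ℝ 2 φ → ∀ x0 ∈ U, IsLocalMin (fun x => u x - φ x) x0 →
    a x0 * deriv (deriv φ) x0 + H x0 (deriv φ x0) ≤ lam

/-- Viscosity subsolution of `a(x) u'' + H(x, u') = lam` on `U`. -/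
def ViscSubOn (a : ℝ → ℝ) (H : ℝ → ℝ → ℝ) (lam : ℝ) (U : Set ℝ) (u : ℝ → ℝ) : Prop :=
  ∀ φ : ℝ → ℝ, ContDiff ℝ 2 φ → ∀ x0 ∈ U, IsLocalMax (fun x => u x - φ x) x0 →
    lam ≤ a x0 * deriv (deriv φ) x0 + H x0 (deriv φ x0)

/-- Viscosity solution of `a(x) u'' + H(x, u') = lam` on `U`. -/
def ViscSolOn (a : ℝ → ℝ) (H : ℝ → ℝ → ℝ) (lam : ℝ) (U : Set ℝ) (u : ℝ → ℝ) : Prop :=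
  ViscSubOn a H lam U u ∧ ViscSuperOn a H lam U u

/-- The critical value `λ₀`: the infimum of the levels `lam` at which the stationary
equation `a u'' + H(x, u') = lam` admits a continuous viscosity supersolution on `ℝ`. -/
def CriticalValue (a : ℝ → ℝ) (H : ℝ → ℝ → ℝ) : ℝ :=
  sInf {lam : ℝ | ∃ u : ℝ → ℝ, Continuous u ∧ ViscSuperOn a H lam Set.univ u}

/-- Condition (A1'): `a ≢ 0` and every connected component of `A := {a > 0}` is bounded
(components of an open subset of `ℝ` are automatically open intervals). -/
def CondA1' (a : ℝ → ℝ) : Prop :=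
  (∃ x, a x ≠ 0) ∧
  ∀ x, 0 < a x → Bornology.IsBounded (connectedComponentIn {y : ℝ | 0 < a y} x)

/-!
Let `g = H(x₀, ·)`. Near `x₀`, the sign of `f'` on a level `{f = c}` is that of `lam - g c`, so `f`
can cross a level `c` with `g c ≠ lam` in one direction only. Such levels are dense because `g`
decreases and then increases strictly, so the bounded function `f` has a limit `p`.
Since `f` converges, the mean value theorem on `[x₀ + h, x₀ + 2h]` produces points `ξ → x₀` with
`(ξ - x₀) f'(ξ) → 0`. As `a(x) = O(x - x₀)`, also `a(ξ) f'(ξ) → 0`, and the equation gives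
`g p = lam`. Finally, a point of the level set of such a `g` is an endpoint of the sublevel set.
A right endpoint of the interval is reduced to a left one by `f ↦ -f(-·)`, which preserves the form
of the equation.
-/

open Asymptotics Function

section Valley

variable {g : ℝ → ℝ} {m : ℝ}

lemma dense_ne_of_strictAntiOn_of_strictMonoOn (hanti : StrictAntiOn g (Iic m))
    (hmono : StrictMonoOn g (Ici m)) (lam : ℝ) : Dense {p | g p ≠ lam} := by
  have subsingleton_level : ∀ s, InjOn g s → (s ∩ {p | g p = lam}).Subsingleton :=
    fun s hs p hp q hq => hs hp.1 hq.1 (hp.2.trans hq.2.symm)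
  have level_finite : {p | g p = lam}.Finite := by
    refine ((subsingleton_level _ hanti.injOn).finite.union
      (subsingleton_level _ hmono.injOn).finite).subset fun p hp => ?_
    exact (le_total p m).imp (fun h => ⟨h, hp⟩) (fun h => ⟨h, hp⟩)
  exact level_finite.countable.dense_compl ℝ

lemma eq_or_eq_of_sublevel_eq_Icc {lam u v p : ℝ} (hanti : StrictAntiOn g (Iic m))
    (hmono : StrictMonoOn g (Ici m)) (hsub : {q | g q ≤ lam} = Icc u v) (hp : g p = lam) :
    p = u ∨ p = v := by
  have hpI : p ∈ Icc u v := hsub ▸ hp.le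
  have huv : u ≤ v := hpI.1.trans hpI.2
  have hu : g u ≤ g p := hp ▸ (hsub ▸ left_mem_Icc.2 huv : u ∈ {q | g q ≤ lam})
  have hv : g v ≤ g p := hp ▸ (hsub ▸ right_mem_Icc.2 huv : v ∈ {q | g q ≤ lam})
  rcases le_total p m with hpm | hmp
  · exact .inl <| ((hanti.le_iff_ge (hpI.1.trans hpm) hpm).1 hu).antisymm hpI.1
  · exact .inr <| hpI.2.antisymm <| (hmono.le_iff_le (hmp.trans hpI.2) hmp).1 hv

end Valley

section OneSided

variable {f : ℝ → ℝ} {x₀ : ℝ}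

lemma eventually_forall_Ioc_of_eventually_nhdsGT {P : ℝ → Prop} (h : ∀ᶠ x in 𝓝[>] x₀, P x) :
    ∀ᶠ x in 𝓝[>] x₀, ∀ y ∈ Ioc x₀ x, P y := by
  obtain ⟨u, hu, hP⟩ := mem_nhdsGT_iff_exists_Ioo_subset.1 h
  filter_upwards [Ioo_mem_nhdsGT hu] with x hx y hy
  exact hP ⟨hy.1, hy.2.trans_lt hx.2⟩

lemma not_frequently_lt_and_frequently_gt_of_deriv_neg {c : ℝ}
    (hf : ∀ᶠ x in 𝓝[>] x₀, DifferentiableAt ℝ f x)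
    (hneg : ∀ᶠ x in 𝓝[>] x₀, f x = c → deriv f x < 0) :
    ¬((∃ᶠ x in 𝓝[>] x₀, f x < c) ∧ ∃ᶠ x in 𝓝[>] x₀, c < f x) := by
  rintro ⟨hlt, hgt⟩
  obtain ⟨y, hcy, hy, hx₀y⟩ := (hgt.and_eventually
    ((eventually_forall_Ioc_of_eventually_nhdsGT (hf.and hneg)).and self_mem_nhdsWithin)).exists
  obtain ⟨x, hxc, hx₀x, hxy⟩ := (hlt.and_eventually (Ioo_mem_nhdsGT hx₀y)).exists
  have hI : Icc x y ⊆ Ioc x₀ y := fun z hz => ⟨hx₀x.trans_le hz.1, hz.2⟩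
  have hyc : f y ≤ c := image_le_of_deriv_right_lt_deriv_boundary
    (fun z hz => (hy z (hI hz)).1.continuousAt.continuousWithinAt)
    (fun z hz => (hy z (hI (Ico_subset_Icc_self hz))).1.hasDerivAt.hasDerivWithinAt)
    hxc.le (fun z => hasDerivAt_const z c)
    (fun z hz => (hy z (hI (Ico_subset_Icc_self hz))).2) (right_mem_Icc.2 hxy.le)
  exact hyc.not_gt hcy

lemma not_frequently_lt_and_frequently_gt_of_deriv_pos {c : ℝ}
    (hf : ∀ᶠ x in 𝓝[>] x₀, DifferentiableAt ℝ f x)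
    (hpos : ∀ᶠ x in 𝓝[>] x₀, f x = c → 0 < deriv f x) :
    ¬((∃ᶠ x in 𝓝[>] x₀, f x < c) ∧ ∃ᶠ x in 𝓝[>] x₀, c < f x) := by
  have := not_frequently_lt_and_frequently_gt_of_deriv_neg (f := -f) (c := -c)
    (hf.mono fun x hx => hx.neg)
    (hpos.mono fun x hx hxc => by simpa [deriv.neg] using hx (neg_inj.1 hxc))
  simpa only [Pi.neg_apply, neg_lt_neg_iff, and_comm] using this

lemma tendsto_two_mul_sub_nhdsGT (x₀ : ℝ) :
    Tendsto (fun x => 2 * x - x₀) (𝓝[>] x₀) (𝓝[>] x₀) := by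
  refine tendsto_nhdsWithin_iff.2 ⟨tendsto_nhdsWithin_of_tendsto_nhds ?_, ?_⟩
  · exact (by fun_prop : Continuous fun x : ℝ => 2 * x - x₀).tendsto' _ _ (by ring)
  · filter_upwards [self_mem_nhdsWithin] with x (hx : x₀ < x)
    exact mem_Ioi.2 (by linarith)

lemma eventually_exists_sub_mul_deriv_eq (hf : ∀ᶠ x in 𝓝[>] x₀, DifferentiableAt ℝ f x) :
    ∀ᶠ x in 𝓝[>] x₀, ∃ z ∈ Ioo x (2 * x - x₀),
      (x - x₀) * deriv f z = f (2 * x - x₀) - f x := by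
  filter_upwards [self_mem_nhdsWithin, (tendsto_two_mul_sub_nhdsGT x₀).eventually
    (eventually_forall_Ioc_of_eventually_nhdsGT hf)] with x (hx : x₀ < x) hdiff
  obtain ⟨z, hz, hslope⟩ := exists_deriv_eq_slope f (show x < 2 * x - x₀ by linarith)
    (fun z hz => (hdiff z ⟨hx.trans_le hz.1, hz.2⟩).continuousAt.continuousWithinAt)
    (fun z hz => (hdiff z ⟨hx.trans hz.1, hz.2.le⟩).differentiableWithinAt)
  refine ⟨z, hz, ?_⟩
  rw [hslope, show 2 * x - x₀ - x = x - x₀ by ring, mul_div_cancel₀ _ (sub_pos.2 hx).ne']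

lemma exists_tendsto_sub_mul_deriv_zero {p : ℝ} (hf : ∀ᶠ x in 𝓝[>] x₀, DifferentiableAt ℝ f x)
    (hlim : Tendsto f (𝓝[>] x₀) (𝓝 p)) :
    ∃ ξ : ℝ → ℝ, Tendsto ξ (𝓝[>] x₀) (𝓝[>] x₀) ∧
      Tendsto (fun x => (ξ x - x₀) * deriv f (ξ x)) (𝓝[>] x₀) (𝓝 0) := by
  have htwo := tendsto_two_mul_sub_nhdsGT x₀
  obtain ⟨ξ, hξ⟩ := (eventually_exists_sub_mul_deriv_eq hf).choice
  have hξ_mem : ∀ᶠ x in 𝓝[>] x₀, x₀ < x ∧ x < ξ x ∧ ξ x < 2 * x - x₀ :=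
    eventually_mem_nhdsWithin.and (hξ.mono fun x hx => hx.1)
  refine ⟨ξ, tendsto_nhdsWithin_iff.2 ⟨?_, hξ_mem.mono fun x hx => hx.1.trans hx.2.1⟩, ?_⟩
  · exact tendsto_of_tendsto_of_tendsto_of_le_of_le' (tendsto_id'.2 nhdsWithin_le_nhds)
      (tendsto_nhds_of_tendsto_nhdsWithin htwo)
      (hξ_mem.mono fun x hx => hx.2.1.le) (hξ_mem.mono fun x hx => hx.2.2.le)
  · have increment_tendsto : Tendsto (fun x => 2 * |f (2 * x - x₀) - f x|) (𝓝[>] x₀) (𝓝 0) := by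
      simpa using ((hlim.comp htwo).sub hlim).abs.const_mul 2
    refine squeeze_zero_norm' ?_ increment_tendsto
    filter_upwards [hξ, hξ_mem] with x ⟨_, hslope⟩ ⟨hx₀x, hxξ, hξ2⟩
    calc ‖(ξ x - x₀) * deriv f (ξ x)‖ = (ξ x - x₀) * |deriv f (ξ x)| := by
          rw [norm_mul, norm_of_nonneg (sub_pos.2 (hx₀x.trans hxξ)).le, norm_eq_abs]
      _ ≤ 2 * (x - x₀) * |deriv f (ξ x)| := by gcongr; linarith
      _ = 2 * |f (2 * x - x₀) - f x| := by
          rw [← hslope, abs_mul, abs_of_pos (sub_pos.2 hx₀x), mul_assoc]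

end OneSided

/-- `f` solves `a(x) f' + H(x, f) = lam` at all points along the filter `l`; with `l = 𝓝[>] x₀` or
`l = 𝓝[<] x₀` this means on a one-sided neighbourhood of `x₀`. Differentiability is required
because `deriv` vanishes where `f` is not differentiable. -/
def IsSolutionAlong (a : ℝ → ℝ) (H : ℝ → ℝ → ℝ) (lam : ℝ) (f : ℝ → ℝ) (l : Filter ℝ) : Prop :=
  ∀ᶠ x in l, DifferentiableAt ℝ f x ∧ a x * deriv f x + H x (f x) = lam

namespace IsSolutionAlong

variable {a f : ℝ → ℝ} {H : ℝ → ℝ → ℝ} {lam x₀ : ℝ}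

lemma not_frequently_lt_and_frequently_gt {c : ℝ} (hf : IsSolutionAlong a H lam f (𝓝[>] x₀))
    (ha : ∀ᶠ x in 𝓝[>] x₀, 0 < a x) (hH : ContinuousAt (H · c) x₀) (hc : H x₀ c ≠ lam) :
    ¬((∃ᶠ x in 𝓝[>] x₀, f x < c) ∧ ∃ᶠ x in 𝓝[>] x₀, c < f x) := by
  have hdiff : ∀ᶠ x in 𝓝[>] x₀, DifferentiableAt ℝ f x := hf.mono fun x hx => hx.1
  rcases hc.lt_or_gt with hlt | hgt
  · refine not_frequently_lt_and_frequently_gt_of_deriv_pos hdiff ?_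
    filter_upwards [hf, ha, nhdsWithin_le_nhds (hH.eventually_lt_const hlt)]
      with x ⟨_, hode⟩ hax hHx hfx
    rw [hfx] at hode
    exact pos_of_mul_pos_right (by linarith : 0 < a x * deriv f x) hax.le
  · refine not_frequently_lt_and_frequently_gt_of_deriv_neg hdiff ?_
    filter_upwards [hf, ha, nhdsWithin_le_nhds (hH.eventually_const_lt hgt)]
      with x ⟨_, hode⟩ hax hHx hfx
    rw [hfx] at hode
    exact neg_of_mul_neg_right (by linarith : a x * deriv f x < 0) hax.le

lemma exists_tendsto (hf : IsSolutionAlong a H lam f (𝓝[>] x₀))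
    (ha : ∀ᶠ x in 𝓝[>] x₀, 0 < a x) (hH : ∀ p, ContinuousAt (H · p) x₀)
    (hdense : Dense {p | H x₀ p ≠ lam}) (hbdd : IsBoundedUnder (· ≤ ·) (𝓝[>] x₀) (|f ·|)) :
    ∃ p, Tendsto f (𝓝[>] x₀) (𝓝 p) := by
  obtain ⟨hle, hge⟩ := isBoundedUnder_le_abs.1 hbdd
  refine tendsto_of_no_upcrossings hdense (fun c hc d _ hcd ⟨hlt, hgt⟩ => ?_) hle hge
  exact hf.not_frequently_lt_and_frequently_gt ha (hH c) hc ⟨hlt, hgt.mono fun x => hcd.trans⟩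

lemma eq_of_tendsto {p : ℝ} (hf : IsSolutionAlong a H lam f (𝓝[>] x₀))
    (ha : a =O[𝓝[>] x₀] (· - x₀)) (hH : ContinuousAt (uncurry H) (x₀, p))
    (hlim : Tendsto f (𝓝[>] x₀) (𝓝 p)) : H x₀ p = lam := by
  obtain ⟨ξ, hξ, hξ_deriv⟩ := exists_tendsto_sub_mul_deriv_zero (hf.mono fun x hx => hx.1) hlim
  have diffusion_tendsto : Tendsto (fun x => a (ξ x) * deriv f (ξ x)) (𝓝[>] x₀) (𝓝 0) :=
    ((ha.comp_tendsto hξ).mul (isBigO_refl _ _)).trans_tendsto hξ_deriv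
  have hamiltonian_tendsto :
      Tendsto (fun x => H (ξ x) (f (ξ x))) (𝓝[>] x₀) (𝓝 (H x₀ p)) :=
    hH.tendsto.comp ((tendsto_nhds_of_tendsto_nhdsWithin hξ).prodMk_nhds (hlim.comp hξ))
  refine tendsto_nhds_unique (hamiltonian_tendsto.congr' ?_)
    (by simpa using diffusion_tendsto.const_sub lam)
  filter_upwards [hξ.eventually hf] with x hx
  linarith [hx.2]

lemma comp_neg (hf : IsSolutionAlong a H lam f (𝓝[<] x₀)) :
    IsSolutionAlong (fun x => a (-x)) (fun x p => H (-x) (-p)) lam (fun x => -f (-x))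
      (𝓝[>] (-x₀)) := by
  have tendsto_neg : Tendsto Neg.neg (𝓝[>] (-x₀)) (𝓝[<] x₀) := tendsto_neg_nhdsGT_neg
  filter_upwards [tendsto_neg.eventually hf] with x ⟨hdiff, hode⟩
  have hderiv : HasDerivAt (fun y => -f (-y)) (deriv f (-x)) x := by
    simpa [comp_def] using (hdiff.hasDerivAt.comp x (hasDerivAt_neg x)).fun_neg
  exact ⟨hderiv.differentiableAt, by simpa [hderiv.deriv] using hode⟩

theorem exists_tendsto_eq_nhdsGT (hf : IsSolutionAlong a H lam f (𝓝[>] x₀))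
    (hpos : ∀ᶠ x in 𝓝[>] x₀, 0 < a x) (ha : a =O[𝓝[>] x₀] (· - x₀))
    (hH : ∀ p, ContinuousAt (uncurry H) (x₀, p)) (hdense : Dense {p | H x₀ p ≠ lam})
    (hbdd : IsBoundedUnder (· ≤ ·) (𝓝[>] x₀) (|f ·|)) :
    ∃ p, H x₀ p = lam ∧ Tendsto f (𝓝[>] x₀) (𝓝 p) := by
  have hH_left : ∀ p, ContinuousAt (H · p) x₀ := fun p =>
    (hH p).comp (f := fun x => (x, p)) (by fun_prop)
  obtain ⟨p, hlim⟩ := hf.exists_tendsto hpos hH_left hdense hbdd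
  exact ⟨p, hf.eq_of_tendsto ha (hH p) hlim, hlim⟩

theorem exists_tendsto_eq_nhdsLT (hf : IsSolutionAlong a H lam f (𝓝[<] x₀))
    (hpos : ∀ᶠ x in 𝓝[<] x₀, 0 < a x) (ha : a =O[𝓝[<] x₀] (· - x₀))
    (hH : ∀ p, ContinuousAt (uncurry H) (x₀, p)) (hdense : Dense {p | H x₀ p ≠ lam})
    (hbdd : IsBoundedUnder (· ≤ ·) (𝓝[<] x₀) (|f ·|)) :
    ∃ p, H x₀ p = lam ∧ Tendsto f (𝓝[<] x₀) (𝓝 p) := by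
  have tendsto_neg : Tendsto Neg.neg (𝓝[>] (-x₀)) (𝓝[<] x₀) := tendsto_neg_nhdsGT_neg
  have ha_neg : (fun x => a (-x)) =O[𝓝[>] (-x₀)] (· - -x₀) :=
    (ha.comp_tendsto tendsto_neg).trans <| isBigO_of_le _ fun x => by
      rw [comp_apply, ← norm_neg, neg_sub, sub_neg_eq_add, sub_neg_eq_add, add_comm]
  have hH_neg : ∀ p, ContinuousAt (uncurry fun x p => H (-x) (-p)) (-x₀, p) := fun p =>
    ContinuousAt.comp (g := uncurry H) (f := Neg.neg) (by simpa using hH (-p)) continuousAt_neg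
  have hdense_neg : Dense {p | H (- -x₀) (-p) ≠ lam} := by
    simpa using hdense.preimage (Homeomorph.neg ℝ).isOpenMap
  have hbdd_neg : IsBoundedUnder (· ≤ ·) (𝓝[>] (-x₀)) fun x => |-f (-x)| := by
    obtain ⟨M, hM⟩ := hbdd.eventually_le
    exact isBoundedUnder_of_eventually_le (a := M) <| by
      simpa only [abs_neg] using tendsto_neg.eventually hM
  obtain ⟨p, hp, hlim⟩ := hf.comp_neg.exists_tendsto_eq_nhdsGT (tendsto_neg.eventually hpos)
    ha_neg hH_neg hdense_neg hbdd_neg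
  refine ⟨-p, by simpa using hp, ?_⟩
  simpa [comp_def] using (hlim.comp tendsto_neg_nhdsLT).neg

end IsSolutionAlong

lemma HamClass.continuous {a0 a1 g : ℝ} {H : ℝ → ℝ → ℝ} (hH : HamClass a0 a1 g H) (hg : 1 ≤ g) :
    Continuous (uncurry H) := by
  obtain ⟨-, -, hH2, hH3⟩ := hH
  refine continuous_iff_continuousAt.2 fun ⟨x, p⟩ => tendsto_iff_dist_tendsto_zero.2 ?_
  have modulus_continuous : Continuous fun z : ℝ × ℝ =>
      a1 * (|z.2| + |p| + 1) ^ (g - 1) * |z.2 - p| + a1 * (|p| ^ g + 1) * |z.1 - x| := by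
    have : Continuous fun z : ℝ × ℝ => (|z.2| + |p| + 1) ^ (g - 1) :=
      .rpow_const (by fun_prop) fun _ => .inr (sub_nonneg.2 hg)
    fun_prop
  refine squeeze_zero (fun _ => dist_nonneg) (fun z => ?_)
    (modulus_continuous.tendsto' (x, p) 0 (by simp))
  calc |H z.1 z.2 - H x p| ≤ |H z.1 z.2 - H z.1 p| + |H z.1 p - H x p| := abs_sub_le _ _ _
    _ ≤ _ := add_le_add (hH2 _ _ _) (hH3 _ _ _)

namespace HamSqc

variable {a0 a1 g eta : ℝ} {H : ℝ → ℝ → ℝ} {phat : ℝ → ℝ}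

lemma strictAntiOn (hH : HamSqc a0 a1 g eta H phat) (heta : 0 < eta) (x : ℝ) :
    StrictAntiOn (H x) (Iic (phat x)) := fun p _ q hq hpq =>
  sub_pos.1 <| (mul_pos heta (abs_sub_pos.2 hpq.ne)).trans_le (hH.2.2.2.1 x p q hpq hq)

lemma strictMonoOn (hH : HamSqc a0 a1 g eta H phat) (heta : 0 < eta) (x : ℝ) :
    StrictMonoOn (H x) (Ici (phat x)) := fun p hp q _ hpq =>
  sub_pos.1 <| (mul_pos heta (abs_sub_pos.2 hpq.ne)).trans_le (hH.2.2.2.2 x p q hp hpq)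

end HamSqc

lemma isBigO_sub_of_abs_sqrt_sub_sqrt_le {a : ℝ → ℝ} {κ x₀ : ℝ} (ha : ∀ x, 0 ≤ a x)
    (hsqrt : ∀ x, |√(a x) - √(a x₀)| ≤ κ * |x - x₀|) (hx₀ : a x₀ = 0) :
    a =O[𝓝 x₀] (· - x₀) := by
  have hsqrt_le : ∀ x, √(a x) ≤ κ * |x - x₀| := fun x => by
    simpa [hx₀, abs_of_nonneg] using hsqrt x
  have ha_sq : a =O[𝓝 x₀] fun x => ‖x - x₀‖ ^ 2 := by
    refine .of_bound (κ ^ 2) (.of_forall fun x => ?_)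
    calc ‖a x‖ = √(a x) ^ 2 := by rw [sq_sqrt (ha x), norm_of_nonneg (ha x)]
      _ ≤ (κ * |x - x₀|) ^ 2 := by gcongr; exact hsqrt_le x
      _ = κ ^ 2 * ‖‖x - x₀‖ ^ 2‖ := by rw [mul_pow, norm_pow, norm_norm, norm_eq_abs]
  exact ha_sq.trans (isLittleO_pow_sub_sub x₀ one_lt_two).isBigO

theorem statement_10_general {a f : ℝ → ℝ} {H : ℝ → ℝ → ℝ} {m u v l1 l2 x0 lam : ℝ}
    (hH : ∀ p, ContinuousAt (uncurry H) (x0, p))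
    (hanti : StrictAntiOn (H x0) (Iic m)) (hmono : StrictMonoOn (H x0) (Ici m))
    (hsub : H x0 m ≤ lam → {p | H x0 p ≤ lam} = Icc u v)
    (hl : l1 < l2) (hpos : ∀ x ∈ Ioo l1 l2, 0 < a x) (hx0 : x0 = l1 ∨ x0 = l2)
    (ha : a =O[𝓝[Ioo l1 l2] x0] (· - x0)) (hf : DifferentiableOn ℝ f (Ioo l1 l2))
    (hbdd : ∃ M, ∀ x ∈ Ioo l1 l2, |f x| ≤ M)
    (hode : ∀ x ∈ Ioo l1 l2, a x * deriv f x + H x (f x) = lam) :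
    H x0 m ≤ lam ∧ ∃ p, (p = u ∨ p = v) ∧ Tendsto f (𝓝[Ioo l1 l2] x0) (𝓝 p) := by
  have hsol : IsSolutionAlong a H lam f (𝓝[Ioo l1 l2] x0) :=
    eventually_nhdsWithin_of_forall fun x hx =>
      ⟨hf.differentiableAt (Ioo_mem_nhds hx.1 hx.2), hode x hx⟩
  have hpos_ev : ∀ᶠ x in 𝓝[Ioo l1 l2] x0, 0 < a x := eventually_nhdsWithin_of_forall hpos
  have hbdd_ev : IsBoundedUnder (· ≤ ·) (𝓝[Ioo l1 l2] x0) (|f ·|) :=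
    hbdd.imp fun M hM => eventually_map.2 (eventually_nhdsWithin_of_forall hM)
  have hdense := dense_ne_of_strictAntiOn_of_strictMonoOn hanti hmono lam
  obtain ⟨p, hp, hlim⟩ : ∃ p, H x0 p = lam ∧ Tendsto f (𝓝[Ioo l1 l2] x0) (𝓝 p) := by
    rcases hx0 with rfl | rfl
    · rw [nhdsWithin_Ioo_eq_nhdsGT hl] at hsol hpos_ev ha hbdd_ev ⊢
      exact hsol.exists_tendsto_eq_nhdsGT hpos_ev ha hH hdense hbdd_ev
    · rw [nhdsWithin_Ioo_eq_nhdsLT hl] at hsol hpos_ev ha hbdd_ev ⊢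
      exact hsol.exists_tendsto_eq_nhdsLT hpos_ev ha hH hdense hbdd_ev
  have hmin : H x0 m ≤ H x0 p := (le_total p m).elim
    (fun h => hanti.antitoneOn h self_mem_Iic h) (fun h => hmono.monotoneOn self_mem_Ici h h)
  have hle : H x0 m ≤ lam := hmin.trans_eq hp
  exact ⟨hle, p, eq_or_eq_of_sublevel_eq_Icc hanti hmono (hsub hle) hp, hlim⟩

/-- Theorem `appC teo boundary regularity`: let `J = (l1,l2)` be an open
bounded interval on which `a > 0`, and `x0 ∈ ∂J` with `a(x0) = 0`.  If `f` is a bounded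
`C¹` solution of `a f' + H(x,f) = lam` on `J`, then `f(x)` has a limit as `x → x0` in `J`,
belonging to `{p⁻_lam(x0), p⁺_lam(x0)}`; in particular `lam ≥ λ̂(x0)`. -/
theorem statement_10
    (a : ℝ → ℝ) (H : ℝ → ℝ → ℝ) (phat : ℝ → ℝ) (pm pp : ℝ → ℝ → ℝ)
    (κ α0 α1 γ η : ℝ)
    (harange : ∀ x, a x ∈ Set.Icc (0:ℝ) 1)
    (hκ : 0 < κ) (hA2 : ∀ x y : ℝ, |Real.sqrt (a x) - Real.sqrt (a y)| ≤ κ * |x - y|)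
    (hA1' : CondA1' a)
    (hα0 : 0 < α0) (hα1 : 0 < α1) (hγ : 2 < γ) (hη : 0 < η)
    (hH : HamSqc α0 α1 γ η H phat)
    -- `p⁻_lam(x) ≤ p⁺_lam(x)` are the endpoints of the sublevel set `{H(x,·) ≤ lam}`
    (hp : ∀ lam x : ℝ, H x (phat x) ≤ lam →
      {p : ℝ | H x p ≤ lam} = Set.Icc (pm lam x) (pp lam x))
    (l1 l2 : ℝ) (hl : l1 < l2)
    (hJpos : ∀ x ∈ Set.Ioo l1 l2, 0 < a x)
    (x0 : ℝ) (hx0 : x0 = l1 ∨ x0 = l2) (hax0 : a x0 = 0)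
    (f : ℝ → ℝ) (lam : ℝ)
    (hf1 : ContDiffOn ℝ 1 f (Set.Ioo l1 l2))
    (hfbdd : ∃ M : ℝ, ∀ x ∈ Set.Ioo l1 l2, |f x| ≤ M)
    (hode : ∀ x ∈ Set.Ioo l1 l2, a x * deriv f x + H x (f x) = lam) :
    H x0 (phat x0) ≤ lam ∧
    ∃ p : ℝ, (p = pm lam x0 ∨ p = pp lam x0) ∧
      Tendsto f (𝓝[Set.Ioo l1 l2] x0) (𝓝 p) := by
  exact statement_10_general (fun _ => (hH.1.continuous (by linarith)).continuousAt)
    (hH.strictAntiOn hη x0) (hH.strictMonoOn hη x0) (hp lam x0) hl hJpos hx0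
    ((isBigO_sub_of_abs_sqrt_sub_sqrt_le (fun x => (harange x).1) (hA2 · x0) hax0).mono
      nhdsWithin_le_nhds)
    (hf1.differentiableOn one_ne_zero) hfbdd hode
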